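/- arXiv:2108.00619 — 3 statements merged into one kernel-verified Lean document; each statement's English description precedes it below -/
import Mathlib

section
/- Let β⁺, β⁻, α⁺, α⁻ > 0 and ρ = β⁻/β⁺. For every pair of real numbers (q⁺, q⁻) with α⁺ q⁺ = α⁻ q⁻, there exists a pair (v⁺, v⁻) of lowest-order Nédélec fields satisfying the H(curl) IFE jump conditions (tangential continuity on L, α⁺ curl v⁺ = α⁻ curl v⁻, and β⁺ (v⁺(x^m)·n) = β⁻ (v⁻(x^m)·n)) such that curl v⁺ = q⁺ and curl v⁻ = q⁻. That is, curl maps the local H(curl) IFE space onto the weighted piecewise constant space Q^{α}_h(K) = {(q⁺, q⁻) : α⁺ q⁺ = α⁻ q⁻}. -/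
/-!
For `J` the `π/2` rotation, the field `x ↦ b J(x − xm)` has constant curl `2 b` and vanishes at `xm`.
Moreover `J(y) · t = −(y · n)`, so its tangential component vanishes on the whole line `L`.
With `b = q⁺ / 2` and `b = q⁻ / 2` on the two sides, the tangential and normal jump conditions
therefore both read `0 = 0`, and the curl condition is the hypothesis `α⁺ q⁺ = α⁻ q⁻`.
-/

open Matrix

/-- The tangential vector `t = (n₂, −n₁)`. -/
noncomputable def tvec (n : Fin 2 → ℝ) : Fin 2 → ℝ := ![n 1, -n 0]

/-- The `π/2` rotation `J(y₁, y₂) = (−y₂, y₁)`. -/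
noncomputable def Jrot (y : Fin 2 → ℝ) : Fin 2 → ℝ := ![-(y 1), y 0]

/-- The scalar curl `curl w = ∂₁w₂ − ∂₂w₁` of a planar vector field. -/
noncomputable def curl2 (w : (Fin 2 → ℝ) → Fin 2 → ℝ) (x : Fin 2 → ℝ) : ℝ :=
  fderiv ℝ (fun y => w y 1) x (Pi.single 0 1) - fderiv ℝ (fun y => w y 0) x (Pi.single 1 1)

theorem curl2_nedelec (a : Fin 2 → ℝ) (b : ℝ) (x : Fin 2 → ℝ) :
    curl2 (fun x => a + b • Jrot x) x = 2 * b := by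
  have h1 : HasFDerivAt (fun y : Fin 2 → ℝ => a 1 + b * y 0)
      (b • ContinuousLinearMap.proj (R := ℝ) (φ := fun _ : Fin 2 => ℝ) 0) x :=
    ((hasFDerivAt_apply (𝕜 := ℝ) (0 : Fin 2) x).const_mul b).const_add (a 1)
  have h0 : HasFDerivAt (fun y : Fin 2 → ℝ => a 0 + b * -(y 1))
      (b • -ContinuousLinearMap.proj (R := ℝ) (φ := fun _ : Fin 2 => ℝ) 1) x :=
    ((hasFDerivAt_apply (𝕜 := ℝ) (1 : Fin 2) x).neg.const_mul b).const_add (a 0)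
  have e1 : (fun y : Fin 2 → ℝ => (a + b • Jrot y) 1) = fun y => a 1 + b * y 0 := by
    funext y; simp [Jrot]
  have e0 : (fun y : Fin 2 → ℝ => (a + b • Jrot y) 0) = fun y => a 0 + b * -(y 1) := by
    funext y; simp [Jrot]
  unfold curl2
  rw [e1, e0, h1.fderiv, h0.fderiv]
  simp
  ring

theorem nedelec_dot_tvec (n xm x : Fin 2 → ℝ) (b : ℝ) :
    (-(b • Jrot xm) + b • Jrot x) ⬝ᵥ tvec n = -b * ((x - xm) ⬝ᵥ n) := by
  simp [dotProduct, Fin.sum_univ_two, Jrot, tvec]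
  ring

/-- for every pair `(q⁺, q⁻)` with `α⁺ q⁺ = α⁻ q⁻`, there is a pair of
lowest-order Nédélec fields satisfying the `H(curl)` IFE jump conditions whose curls are
`q⁺` and `q⁻`: `curl` maps the local `H(curl)` IFE space onto `Q^α_h(K)`. -/
theorem IFE_Hcurl_curl_surjective (n : Fin 2 → ℝ) (hn : n 0 ^ 2 + n 1 ^ 2 = 1)
    (βp βm αp αm : ℝ) (hβp : 0 < βp) (hβm : 0 < βm) (hαp : 0 < αp) (hαm : 0 < αm)
    (xm : Fin 2 → ℝ) (qp qm : ℝ) (hq : αp * qp = αm * qm) :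
    ∃ (ap am : Fin 2 → ℝ) (bp bm : ℝ)
      (vp vm : (Fin 2 → ℝ) → Fin 2 → ℝ),
      vp = (fun x => ap + bp • Jrot x) ∧ vm = (fun x => am + bm • Jrot x) ∧
      (∀ x : Fin 2 → ℝ, (x - xm) ⬝ᵥ n = 0 → vp x ⬝ᵥ tvec n = vm x ⬝ᵥ tvec n) ∧
      (∀ x : Fin 2 → ℝ, αp * curl2 vp x = αm * curl2 vm x) ∧
      βp * (vp xm ⬝ᵥ n) = βm * (vm xm ⬝ᵥ n) ∧
      (∀ x : Fin 2 → ℝ, curl2 vp x = qp) ∧ (∀ x : Fin 2 → ℝ, curl2 vm x = qm) := by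
  refine ⟨-((qp / 2) • Jrot xm), -((qm / 2) • Jrot xm), qp / 2, qm / 2, _, _, rfl, rfl,
    fun x hx => ?_, fun x => ?_, ?_, fun x => ?_, fun x => ?_⟩
  · simp only [nedelec_dot_tvec, hx, mul_zero]
  · rw [curl2_nedelec, curl2_nedelec]
    linarith
  · simp
  · rw [curl2_nedelec]
    ring
  · rw [curl2_nedelec]
    ring
end

section
/- Let β⁺, β⁻ > 0, ρ = β⁻/β⁺, M'_ρ = ρ⁻¹ M_ρ, c ∈ ℝ², c₀ ∈ ℝ, and let v⁺(x) = M'_ρ c + c₀ (x − x^m), v⁻(x) = c + c₀ (x − x^m) be the H(div) IFE field. Then: (i) v⁺(x)·n = v⁻(x)·n for every x ∈ L (normal continuity on the interface line); (ii) (β⁺)⁻¹ (v⁺(x^m)·t) = (β⁻)⁻¹ (v⁻(x^m)·t); (iii) div v⁺ = div v⁻ = 2c₀ everywhere. In other words, the explicit representation satisfies all the approximate jump conditions of the H(div) IFE space. -/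
/-!
The symmetric matrix `M_ρ` is diagonal in the orthonormal frame `(n, t)`: `M_ρ n = ρ n`
and `M_ρ t = t`. Hence `ρ⁻¹ M_ρ c` has the same normal component as `c`, while its tangential
component is `ρ⁻¹ c · t`, which the weights `1 / β⁺ = ρ / β⁻` turn into the same value on both
sides. Both fields have the form `a + c₀ (x - xᵐ)` with `a` constant, so their divergence
is `2 c₀`.
-/

open Matrix

/-- The IFE jump matrix `M_ρ` for a unit normal `n = (n 0, n 1)` and parameter `ρ`. -/
noncomputable def Mmat (n : Fin 2 → ℝ) (ρ : ℝ) : Matrix (Fin 2) (Fin 2) ℝ :=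
  !![n 1 ^ 2 + ρ * n 0 ^ 2, (ρ - 1) * n 0 * n 1;
     (ρ - 1) * n 0 * n 1, n 0 ^ 2 + ρ * n 1 ^ 2]

/-- The divergence `div w = ∂₁w₁ + ∂₂w₂` of a planar vector field. -/
noncomputable def div2 (w : (Fin 2 → ℝ) → Fin 2 → ℝ) (x : Fin 2 → ℝ) : ℝ :=
  fderiv ℝ (fun y => w y 0) x (Pi.single 0 1) + fderiv ℝ (fun y => w y 1) x (Pi.single 1 1)

/-- `M_ρ` is symmetric and `n` is an eigenvector with eigenvalue `ρ`. -/
lemma Mmat_mulVec_dot_normal (n : Fin 2 → ℝ) (hn : n 0 ^ 2 + n 1 ^ 2 = 1) (ρ : ℝ)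
    (c : Fin 2 → ℝ) : (Mmat n ρ *ᵥ c) ⬝ᵥ n = ρ * (c ⬝ᵥ n) := by
  simp only [Mmat, mulVec, dotProduct, Fin.sum_univ_two, of_apply, cons_val', cons_val_zero,
    cons_val_one, cons_val_fin_one]
  linear_combination ρ * (c 0 * n 0 + c 1 * n 1) * hn

/-- `M_ρ` is symmetric and `t` is an eigenvector with eigenvalue `1`. -/
lemma Mmat_mulVec_dot_tvec (n : Fin 2 → ℝ) (hn : n 0 ^ 2 + n 1 ^ 2 = 1) (ρ : ℝ)
    (c : Fin 2 → ℝ) : (Mmat n ρ *ᵥ c) ⬝ᵥ tvec n = c ⬝ᵥ tvec n := by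
  simp only [Mmat, tvec, mulVec, dotProduct, Fin.sum_univ_two, of_apply, cons_val',
    cons_val_zero, cons_val_one, cons_val_fin_one]
  linear_combination (c 0 * n 1 - c 1 * n 0) * hn

lemma div2_const_add_smul_sub (a xm : Fin 2 → ℝ) (c0 : ℝ) (x : Fin 2 → ℝ) :
    div2 (fun x => a + c0 • (x - xm)) x = 2 * c0 := by
  have h (i : Fin 2) : HasFDerivAt (fun y : Fin 2 → ℝ => (a + c0 • (y - xm)) i)
      (c0 • ContinuousLinearMap.proj (R := ℝ) (φ := fun _ : Fin 2 => ℝ) i) x :=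
    (((hasFDerivAt_apply i x).sub_const (xm i)).const_smul c0).const_add (a i)
  simp only [div2]
  rw [(h 0).fderiv, (h 1).fderiv]
  simp
  ring

/-- the explicit `H(div)` IFE field
`v⁺(x) = M'_ρ c + c₀ (x − xᵐ)`, `v⁻(x) = c + c₀ (x − xᵐ)` (with `M'_ρ = ρ⁻¹ M_ρ`)
satisfies (i) normal continuity on the interface line, (ii) the `β⁻¹`-weighted tangential
jump condition at `xᵐ`, and (iii) `div v⁺ = div v⁻ = 2c₀` everywhere. -/
theorem IFE_Hdiv_jump_conditions (n : Fin 2 → ℝ) (hn : n 0 ^ 2 + n 1 ^ 2 = 1)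
    (βp βm : ℝ) (hβp : 0 < βp) (hβm : 0 < βm) (ρ : ℝ) (hρ : ρ = βm / βp)
    (xm c : Fin 2 → ℝ) (c0 : ℝ)
    (vp vm : (Fin 2 → ℝ) → Fin 2 → ℝ)
    (hvp : vp = fun x => (ρ⁻¹ • Mmat n ρ) *ᵥ c + c0 • (x - xm))
    (hvm : vm = fun x => c + c0 • (x - xm)) :
    (∀ x : Fin 2 → ℝ, (x - xm) ⬝ᵥ n = 0 → vp x ⬝ᵥ n = vm x ⬝ᵥ n) ∧
    βp⁻¹ * (vp xm ⬝ᵥ tvec n) = βm⁻¹ * (vm xm ⬝ᵥ tvec n) ∧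
    (∀ x : Fin 2 → ℝ, div2 vp x = 2 * c0 ∧ div2 vm x = 2 * c0) := by
  have hρ0 : ρ ≠ 0 := by rw [hρ]; positivity
  subst hvp hvm
  refine ⟨fun x _ => ?_, ?_, fun x => ⟨div2_const_add_smul_sub _ _ _ _,
    div2_const_add_smul_sub _ _ _ _⟩⟩
  · simp only [add_dotProduct, smul_mulVec, smul_dotProduct, Mmat_mulVec_dot_normal n hn,
      smul_eq_mul, inv_mul_cancel_left₀ hρ0]
  · simp only [sub_self, smul_zero, add_zero, smul_mulVec, smul_dotProduct,
      Mmat_mulVec_dot_tvec n hn, smul_eq_mul]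
    rw [hρ]
    field_simp
end

section
/- Let β⁺, β⁻, α⁺, α⁻ > 0, ρ = β⁻/β⁺, c ∈ ℝ², c₀ ∈ ℝ, and let v⁺(x) = M_ρ c + (c₀/α⁺) J(x − x^m), v⁻(x) = c + (c₀/α⁻) J(x − x^m) be the H(curl) IFE field. Then the piecewise-defined scalar tangential component g : ℝ² → ℝ, given by g(x) = v⁺(x)·t when (x − x^m)·n ≥ 0 and g(x) = v⁻(x)·t when (x − x^m)·n < 0, is continuous on all of ℝ². -/
/-!
The vector `t` is an eigenvector of the symmetric matrix `M_ρ` with eigenvalue `1`, so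
`M_ρ c · t = c · t`, and `J y · t = -(y · n)`. Hence `v⁺ · t` and `v⁻ · t` differ only in the
coefficient of `(x - xᵐ) · n`, which vanishes on the interface line, so the two continuous
branches agree where they meet.
-/

open Matrix

lemma Mmat_mulVec_dotProduct_tvec (n c : Fin 2 → ℝ) (ρ : ℝ) (hn : n 0 ^ 2 + n 1 ^ 2 = 1) :
    (Mmat n ρ *ᵥ c) ⬝ᵥ tvec n = c ⬝ᵥ tvec n := by
  simp [Mmat, tvec, Matrix.mulVec, dotProduct, Fin.sum_univ_two]
  linear_combination (c 0 * n 1 - c 1 * n 0) * hn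

lemma Jrot_dotProduct_tvec (n y : Fin 2 → ℝ) : Jrot y ⬝ᵥ tvec n = -(y ⬝ᵥ n) := by
  simp [Jrot, tvec, dotProduct, Fin.sum_univ_two]

/-- the piecewise-defined tangential component of the `H(curl)` IFE field
`v⁺(x) = M_ρ c + (c₀/α⁺) J(x − xᵐ)`, `v⁻(x) = c + (c₀/α⁻) J(x − xᵐ)` is continuous on
all of `ℝ²`. -/
theorem IFE_Hcurl_tangential_continuous (n : Fin 2 → ℝ) (hn : n 0 ^ 2 + n 1 ^ 2 = 1)
    (βp βm αp αm : ℝ) (hβp : 0 < βp) (hβm : 0 < βm) (hαp : 0 < αp) (hαm : 0 < αm)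
    (ρ : ℝ) (hρ : ρ = βm / βp) (xm c : Fin 2 → ℝ) (c0 : ℝ)
    (vp vm : (Fin 2 → ℝ) → Fin 2 → ℝ)
    (hvp : vp = fun x => (Mmat n ρ) *ᵥ c + (c0 / αp) • Jrot (x - xm))
    (hvm : vm = fun x => c + (c0 / αm) • Jrot (x - xm)) :
    Continuous (fun x : Fin 2 → ℝ =>
      if 0 ≤ (x - xm) ⬝ᵥ n then vp x ⬝ᵥ tvec n else vm x ⬝ᵥ tvec n) := by
  subst hvp hvm
  simp only [add_dotProduct, smul_dotProduct, Mmat_mulVec_dotProduct_tvec n c ρ hn,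
    Jrot_dotProduct_tvec]
  have h : Continuous fun x : Fin 2 → ℝ => (x - xm) ⬝ᵥ n := by
    simp only [dotProduct]
    fun_prop
  refine Continuous.if_le (by fun_prop) (by fun_prop) continuous_const h fun x hx => ?_
  simp [← hx]
end
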